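/- (Excess risk upper bound for noise-ignorant ERM.) Let ε ∈ [0,1] and κ > 0. Let (P_X, η, η̃) be a triple with P_X(A_κ(η, η̃)) ≥ 1 − ε, let F be a class of measurable classifiers f : 𝒳 → {1,…,K} with Natarajan dimension V, and suppose the noisy Bayes classifier f̃* belongs to F. Let Z^n = ((X_1, Ỹ_1),…,(X_n, Ỹ_n)) be an i.i.d. sample from P_{XỸ} and let f̂ ∈ argmin_{f ∈ F} (1/n) Σ_{i=1}^n 1{f(X_i) ≠ Ỹ_i} be an empirical risk minimizer. Then, assuming all maps involved are measurable, E_{Z^n}[ R(f̂) − R(f*) ] ≤ ε + (1/κ)·16·√( (V·log n + 2V·log K + 4) / (2n) ). -/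

import Mathlib

open MeasureTheory ENNReal

noncomputable section

/-- The probability simplex `Δ^K`. -/
def simplex (K : ℕ) : Set (Fin K → ℝ) :=
  {p | (∀ i, 0 ≤ p i) ∧ ∑ i, p i = 1}

/-- Relative signal strength `M(x; η, η̃)`, where any ratio with zero denominator
(including `0/0`) is taken to be `+∞`. -/
def RSS {K : ℕ} (η ηt : Fin K → ℝ) : ℝ≥0∞ :=
  ⨅ j : Fin K,
    if (⨆ i, η i) - η j = 0 then ⊤
    else ENNReal.ofReal (((⨆ i, ηt i) - ηt j) / ((⨆ i, η i) - η j))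

/-- `A_κ`, the region where the relative signal strength exceeds `κ`. -/
def signalRegion {X : Type*} {K : ℕ} (η ηt : X → Fin K → ℝ) (κ : ℝ) : Set X :=
  {x | ENNReal.ofReal κ < RSS (η x) (ηt x)}

/-- The risk `R(f) = ∫ (1 - [η(x)]_{f(x)}) dP_X(x)` of a classifier `f`. -/
def risk {X : Type*} [MeasurableSpace X] {K : ℕ} (P : Measure X)
    (η : X → Fin K → ℝ) (f : X → Fin K) : ℝ :=
  ∫ x, (1 - η x (f x)) ∂P

/-- The Bayes risk `R(f^*) = ∫ (1 - max_i [η(x)]_i) dP_X(x)`. -/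
def bayesRisk {X : Type*} [MeasurableSpace X] {K : ℕ} (P : Measure X)
    (η : X → Fin K → ℝ) : ℝ :=
  ∫ x, (1 - ⨆ i, η x i) ∂P

/-- The noisy joint distribution `P_{XỸ}` on `𝒳 × {1,…,K}`, determined by
`P_{XỸ}(A × {j}) = ∫_A [η̃(x)]_j dP_X(x)`. -/
def jointMeasure {X : Type*} [MeasurableSpace X] {K : ℕ} (P : Measure X)
    (ηt : X → Fin K → ℝ) : Measure (X × Fin K) :=
  ∑ j : Fin K, ((P.withDensity fun x => ENNReal.ofReal (ηt x j)).map fun x => (x, j))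


/-- The set of indices attaining the maximum of `v`. -/
def argmaxSet {K : ℕ} (v : Fin K → ℝ) : Set (Fin K) :=
  {i | v i = ⨆ j, v j}

/-- A finite set `C` is (Natarajan-)shattered by `F` if there are `g, h` disagreeing
everywhere on `C` such that every `{g,h}`-valued pattern on `C` is realized by some
member of `F`. -/
def NShatters {X : Type*} {K : ℕ} (F : Set (X → Fin K)) (C : Finset X) : Prop :=
  ∃ g h : X → Fin K, (∀ x ∈ C, g x ≠ h x) ∧
    ∀ v : X → Fin K, (∀ x ∈ C, v x = g x ∨ v x = h x) →
      ∃ f ∈ F, ∀ x ∈ C, f x = v x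

/-!
On the region `A_κ` the regret of every label under the clean posterior is at most `1/κ` times its
regret under the noisy posterior, and off `A_κ`, a set of mass at most `ε`, it is at most `1`. So
the clean excess risk of any classifier is at most `ε` plus `1/κ` times its noisy excess risk.

Learning from noisy labels is ordinary learning for the noisy law, so the noisy excess risk of an
empirical risk minimizer is at most the expected gap between its population and empirical risks.
Replacing the population risk by the empirical risk on an independent ghost sample, the gap becomes
invariant under swapping the two samples coordinatewise; averaging over all swaps leaves a
Rademacher average over the label patterns of `F` on the `2n` points. By Natarajan's lemma there are
at most `(2n + 1)^V K^(2V)` patterns, and Massart's lemma turns this count into the square root.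
-/

open scoped BigOperators

section Natarajan

open Finset

variable {X : Type*} {K : ℕ}

/-- The trace `F_{(x_1,…,x_m)}` of a class `F` on a finite family of points, as a finset of label
patterns so that it can be counted. -/
def labelPatterns {ι : Type*} [Fintype ι] (F : Set (X → Fin K)) (x : ι → X) : Finset (ι → Fin K) :=
  by classical exact {u | ∃ f ∈ F, u = f ∘ x}

lemma mem_labelPatterns {ι : Type*} [Fintype ι] {F : Set (X → Fin K)} {x : ι → X} {u : ι → Fin K} :
    u ∈ labelPatterns F x ↔ ∃ f ∈ F, u = f ∘ x := by
  simp [labelPatterns]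

-- The witnesses `g`, `h` of shattering are themselves realized by `F`, which extends them from the
-- points `x i` to all of `X`.
lemma NShatters.image {ι : Type*} [DecidableEq X] {F : Set (X → Fin K)} {x : ι → X}
    {G : Set (ι → Fin K)} (hG : ∀ u ∈ G, ∃ f ∈ F, u = f ∘ x) {C : Finset ι}
    (hC : NShatters G C) : NShatters F (C.image x) := by
  obtain ⟨g, h, hgh, hreal⟩ := hC
  have realize (v : X → Fin K) (hv : ∀ i ∈ C, v (x i) = g i ∨ v (x i) = h i) :
      ∃ f ∈ F, ∀ i ∈ C, f (x i) = v (x i) := by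
    obtain ⟨u, hu, huv⟩ := hreal (v ∘ x) hv
    obtain ⟨f, hf, rfl⟩ := hG u hu
    exact ⟨f, hf, huv⟩
  obtain ⟨u, hu, hug⟩ := hreal g fun _ _ ↦ .inl rfl
  obtain ⟨f, -, rfl⟩ := hG u hu
  obtain ⟨u', hu', huh⟩ := hreal h fun _ _ ↦ .inr rfl
  obtain ⟨f', -, rfl⟩ := hG u' hu'
  simp only [NShatters, forall_mem_image]
  refine ⟨f, f', fun i hi ↦ ?_, fun v hv ↦ realize v fun i hi ↦ ?_⟩
  · simpa only [← hug i hi, ← huh i hi, Function.comp_apply] using hgh i hi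
  · simpa only [← hug i hi, ← huh i hi, Function.comp_apply] using hv hi

lemma NShatters.injOn {ι : Type*} {F : Set (X → Fin K)} {x : ι → X} {G : Set (ι → Fin K)}
    (hG : ∀ u ∈ G, ∃ f ∈ F, u = f ∘ x) {C : Finset ι} (hC : NShatters G C) :
    Set.InjOn x C := by
  classical
  obtain ⟨g, h, hgh, hreal⟩ := hC
  intro i hi j hj hij
  by_contra hne
  have agree (v : ι → Fin K) (hv : ∀ k ∈ C, v k = g k ∨ v k = h k) : v i = v j := by
    obtain ⟨u, hu, huv⟩ := hreal v hv
    obtain ⟨f, -, rfl⟩ := hG u hu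
    rw [← huv i hi, ← huv j hj, Function.comp_apply, Function.comp_apply, hij]
  have hg : g i = g j := agree g fun _ _ ↦ .inl rfl
  have hgh' : g i = h j := by
    simpa [hne] using agree (Function.update g j (h j)) fun k _ ↦ by
      obtain rfl | hk := eq_or_ne k j <;> simp [*]
  exact hgh j hj (hg.symm.trans hgh')

/-- The patterns that extend to members of `H` both by the first label `a` and by the first label
`b`. For `a ≠ b`, the first point can be added to any set they shatter, which drives the induction
in Natarajan's lemma. -/
def commonTails {m : ℕ} (H : Finset (Fin (m + 1) → Fin K)) (a b : Fin K) :
    Finset (Fin m → Fin K) :=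
  {g | (Fin.cons a g : Fin (m + 1) → Fin K) ∈ H ∧ (Fin.cons b g : Fin (m + 1) → Fin K) ∈ H}

lemma mem_commonTails {m : ℕ} {H : Finset (Fin (m + 1) → Fin K)} {a b : Fin K}
    {g : Fin m → Fin K} : g ∈ commonTails H a b ↔
      (Fin.cons a g : Fin (m + 1) → Fin K) ∈ H ∧ (Fin.cons b g : Fin (m + 1) → Fin K) ∈ H := by
  simp [commonTails]

lemma NShatters.insert_zero {m : ℕ} {H : Finset (Fin (m + 1) → Fin K)} {a b : Fin K}
    (hab : a ≠ b) {C : Finset (Fin m)}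
    (hC : NShatters (commonTails H a b : Set (Fin m → Fin K)) C) :
    NShatters (H : Set (Fin (m + 1) → Fin K)) (insert 0 (C.image Fin.succ)) := by
  obtain ⟨g, h, hgh, hreal⟩ := hC
  simp only [NShatters, forall_mem_insert, forall_mem_image]
  refine ⟨Fin.cons a g, Fin.cons b h, ⟨hab, hgh⟩, fun v ⟨hv₀, hv⟩ ↦ ?_⟩
  obtain ⟨f, hf, hfv⟩ := hreal (Fin.tail v) hv
  obtain ⟨hfa, hfb⟩ := mem_commonTails.mp hf
  refine ⟨Fin.cons (v 0) f, ?_, rfl, hfv⟩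
  rcases hv₀ with h₀ | h₀ <;> rw [h₀]
  exacts [hfa, hfb]

lemma card_le_one_add_card_offDiag {α : Type*} (s : Finset α) : #s ≤ 1 + #s.offDiag := by
  classical
  rw [offDiag_card, ← Nat.mul_sub_one]
  cases #s with
  | zero => simp
  | succ k => simpa using by nlinarith

lemma card_le_card_image_tail_add_sum_commonTails {m : ℕ} (H : Finset (Fin (m + 1) → Fin K)) :
    #H ≤ #(H.image Fin.tail) +
      ∑ p ∈ (univ : Finset (Fin K)).offDiag, #(commonTails H p.1 p.2) := by
  let heads (g : Fin m → Fin K) : Finset (Fin K) :=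
    {a | (Fin.cons a g : Fin (m + 1) → Fin K) ∈ H}
  have fiber_le (g : Fin m → Fin K) : #{f ∈ H | Fin.tail f = g} ≤ #(heads g) := by
    refine card_le_card_of_injOn (fun f ↦ f 0) (fun f hf ↦ ?_) fun f hf f' hf' h₀ ↦ ?_
    · obtain ⟨hfH, rfl⟩ := mem_filter.mp hf
      simpa [heads] using hfH
    · have h₀ : f 0 = f' 0 := h₀
      rw [← Fin.cons_self_tail f, ← Fin.cons_self_tail f', (mem_filter.mp hf).2,
        (mem_filter.mp hf').2, h₀]
  have count : ∑ g ∈ H.image Fin.tail, #(heads g).offDiag ≤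
      ∑ p ∈ (univ : Finset (Fin K)).offDiag, #(commonTails H p.1 p.2) := by
    refine (sum_le_univ_sum_of_nonneg fun _ ↦ Nat.zero_le _).trans (le_of_eq ?_)
    convert sum_card_bipartiteAbove_eq_sum_card_bipartiteBelow
      (s := univ) (t := (univ : Finset (Fin K)).offDiag)
      (fun (g : Fin m → Fin K) p ↦ g ∈ commonTails H p.1 p.2) using 3 with g _ p _
    · ext p
      simp only [heads, mem_offDiag, mem_filter, mem_univ, true_and, mem_bipartiteAbove,
        mem_commonTails]
      tauto
    · ext g
      simp [mem_bipartiteBelow]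
  calc #H = ∑ g ∈ H.image Fin.tail, #{f ∈ H | Fin.tail f = g} := card_eq_sum_card_image _ _
    _ ≤ ∑ g ∈ H.image Fin.tail, (1 + #(heads g).offDiag) :=
      sum_le_sum fun g _ ↦ (fiber_le g).trans (card_le_one_add_card_offDiag _)
    _ ≤ _ := by
      rw [sum_add_distrib, sum_const, smul_eq_mul, mul_one]
      gcongr

lemma card_le_one_of_forall_nshatters {ι : Type*} {H : Finset (ι → Fin K)}
    (hH : ∀ C, NShatters (H : Set (ι → Fin K)) C → #C ≤ 0) : #H ≤ 1 := by
  refine card_le_one.mpr fun f hf f' hf' ↦ ?_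
  by_contra hne
  obtain ⟨i, hi⟩ := Function.ne_iff.mp hne
  have shatters : NShatters (H : Set (ι → Fin K)) {i} := by
    refine ⟨f, f', by simpa using hi, fun v hv ↦ ?_⟩
    rcases hv i (mem_singleton_self i) with h | h
    · exact ⟨f, hf, by simp [h]⟩
    · exact ⟨f', hf', by simp [h]⟩
  exact absurd (hH _ shatters) (by simp)

lemma card_le_of_forall_nshatters_card_le (hK : 0 < K) {m d : ℕ} {H : Finset (Fin m → Fin K)}
    (hH : ∀ C, NShatters (H : Set (Fin m → Fin K)) C → #C ≤ d) :
    #H ≤ (m + 1) ^ d * K ^ (2 * d) := by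
  induction m generalizing d with
  | zero => exact (card_le_one_of_subsingleton H).trans (Nat.one_le_iff_ne_zero.mpr (by positivity))
  | succ m ih =>
    cases d with
    | zero => simpa using card_le_one_of_forall_nshatters hH
    | succ d =>
      have tails : #(H.image Fin.tail) ≤ (m + 1) ^ (d + 1) * K ^ (2 * (d + 1)) := by
        refine ih fun C hC ↦ ?_
        have := hH _ (hC.image (x := Fin.succ) fun u hu ↦ by
          obtain ⟨f, hf, rfl⟩ := mem_image.mp (mem_coe.mp hu)
          exact ⟨f, hf, rfl⟩)
        rwa [card_image_of_injective _ (Fin.succ_injective m)] at this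
      have common (p) (hp : p ∈ (univ : Finset (Fin K)).offDiag) :
          #(commonTails H p.1 p.2) ≤ (m + 1) ^ d * K ^ (2 * d) := by
        refine ih fun C hC ↦ ?_
        have := hH _ (hC.insert_zero (mem_offDiag.mp hp).2.2)
        rwa [card_insert_of_notMem (by simp [Fin.succ_ne_zero]),
          card_image_of_injective _ (Fin.succ_injective m), Nat.add_le_add_iff_right] at this
      have pairs : #(univ : Finset (Fin K)).offDiag ≤ K * K := by simp [offDiag_card]
      calc #H ≤ #(H.image Fin.tail) +
            ∑ p ∈ (univ : Finset (Fin K)).offDiag, #(commonTails H p.1 p.2) :=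
          card_le_card_image_tail_add_sum_commonTails H
        _ ≤ (m + 1) ^ (d + 1) * K ^ (2 * (d + 1)) + K * K * ((m + 1) ^ d * K ^ (2 * d)) := by
          gcongr
          exact (sum_le_card_nsmul _ _ _ common).trans (Nat.mul_le_mul_right _ pairs)
        _ = (m + 1) ^ d * ((m + 2) * K ^ (2 * (d + 1))) := by ring
        _ ≤ (m + 2) ^ d * ((m + 2) * K ^ (2 * (d + 1))) := by gcongr; omega
        _ = (m + 1 + 1) ^ (d + 1) * K ^ (2 * (d + 1)) := by ring

lemma card_labelPatterns_le (hK : 0 < K) {V : ℕ} {F : Set (X → Fin K)}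
    (hF : ∀ C, NShatters F C → #C ≤ V) {ι : Type*} [Fintype ι] (x : ι → X) :
    #(labelPatterns F x) ≤ (Fintype.card ι + 1) ^ V * K ^ (2 * V) := by
  classical
  let e := Fintype.equivFin ι
  have reindex : #((labelPatterns F x).image (· ∘ e.symm)) = #(labelPatterns F x) :=
    card_image_of_injective _ e.symm.surjective.injective_comp_right
  rw [← reindex]
  refine card_le_of_forall_nshatters_card_le hK fun C hC ↦ ?_
  have hG (u) (hu : u ∈ ((labelPatterns F x).image (· ∘ e.symm) : Set (Fin _ → Fin K))) :
      ∃ f ∈ F, u = f ∘ (x ∘ e.symm) := by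
    obtain ⟨u', hu', rfl⟩ := mem_image.mp (mem_coe.mp hu)
    obtain ⟨f, hf, rfl⟩ := mem_labelPatterns.mp hu'
    exact ⟨f, hf, rfl⟩
  rw [← card_image_of_injOn (hC.injOn hG)]
  exact hF _ (hC.image hG)

end Natarajan

section Rademacher

open Finset

/-- The Rademacher sign encoded by a Boolean: `true` stands for `-1`. -/
def rademacherSign (b : Bool) : ℝ := if b then -1 else 1

lemma exp_expect_le {α : Type*} [Fintype α] [Nonempty α] (f : α → ℝ) :
    Real.exp (𝔼 a, f a) ≤ 𝔼 a, Real.exp (f a) := by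
  have := convexOn_exp.map_sum_le (t := univ) (w := fun _ : α ↦ (Fintype.card α : ℝ)⁻¹) (p := f)
    (fun _ _ ↦ by positivity) (by simp) fun _ _ ↦ Set.mem_univ _
  simpa [← mul_sum, Fintype.expect_eq_sum_div_card, div_eq_inv_mul] using this

lemma expect_exp_sum_rademacherSign_mul {ι : Type*} [Fintype ι] [DecidableEq ι] (a : ι → ℝ) :
    𝔼 σ : ι → Bool, Real.exp (∑ i, rademacherSign (σ i) * a i) = ∏ i, Real.cosh (a i) := by
  have average (t : ℝ) : (∑ b, Real.exp (rademacherSign b * t)) / 2 = Real.cosh t := by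
    simp [rademacherSign, Real.cosh_eq, add_comm]
  simp_rw [← average]
  rw [Finset.prod_div_distrib, Fintype.prod_sum, Fintype.expect_eq_sum_div_card]
  simp [Real.exp_sum]

lemma expect_exp_sum_rademacherSign_mul_le {ι : Type*} [Fintype ι] [DecidableEq ι] (a : ι → ℝ) :
    𝔼 σ : ι → Bool, Real.exp (∑ i, rademacherSign (σ i) * a i) ≤
      Real.exp ((∑ i, a i ^ 2) / 2) := by
  rw [expect_exp_sum_rademacherSign_mul, sum_div, Real.exp_sum]
  exact prod_le_prod (fun i _ ↦ (Real.cosh_pos _).le) fun i _ ↦ Real.cosh_le_exp_half_sq _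

-- Massart's finite class lemma. The maximizer over the class is replaced by an arbitrary selection
-- rule, and `exp` of the selected value is bounded by the sum over the whole class.
lemma expect_sum_rademacherSign_mul_le_sqrt {ι : Type*} [Fintype ι] [DecidableEq ι]
    {D : Finset (ι → ℝ)} {r : ℝ} (hD : ∀ d ∈ D, ∑ i, d i ^ 2 ≤ r)
    {d : (ι → Bool) → ι → ℝ} (hd : ∀ σ, d σ ∈ D) :
    𝔼 σ, ∑ i, rademacherSign (σ i) * d σ i ≤ √(2 * r * Real.log #D) := by
  set A := 𝔼 σ, ∑ i, rademacherSign (σ i) * d σ i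
  have card_pos : (0 : ℝ) < #D := by
    exact_mod_cast card_pos.mpr ⟨_, hd fun _ ↦ false⟩
  have exp_le (l : ℝ) : Real.exp (l * A) ≤ #D * Real.exp (l ^ 2 * r / 2) :=
    calc Real.exp (l * A)
      _ ≤ 𝔼 σ, Real.exp (∑ i, rademacherSign (σ i) * (l * d σ i)) := by
        simpa only [A, mul_expect, mul_sum, mul_left_comm l] using
          exp_expect_le fun σ ↦ l * ∑ i, rademacherSign (σ i) * d σ i
      _ ≤ 𝔼 σ : ι → Bool, ∑ c ∈ D, Real.exp (∑ i, rademacherSign (σ i) * (l * c i)) :=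
        expect_le_expect fun σ _ ↦ single_le_sum
          (f := fun c : ι → ℝ ↦ Real.exp (∑ i, rademacherSign (σ i) * (l * c i)))
          (fun _ _ ↦ (Real.exp_pos _).le) (hd σ)
      _ = ∑ c ∈ D, 𝔼 σ : ι → Bool, Real.exp (∑ i, rademacherSign (σ i) * (l * c i)) :=
        expect_sum_comm _ _ _
      _ ≤ ∑ c ∈ D, Real.exp (l ^ 2 * r / 2) := by
        refine sum_le_sum fun c hc ↦ (expect_exp_sum_rademacherSign_mul_le _).trans ?_
        simp only [mul_pow, ← mul_sum]
        gcongr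
        exact hD c hc
      _ = #D * Real.exp (l ^ 2 * r / 2) := by rw [sum_const, nsmul_eq_mul]
  have quadratic (l : ℝ) : 0 ≤ r / 2 * (l * l) + -A * l + Real.log #D := by
    have := Real.log_le_log (Real.exp_pos _) (exp_le l)
    rw [Real.log_mul card_pos.ne' (Real.exp_pos _).ne', Real.log_exp, Real.log_exp] at this
    linarith
  refine Real.le_sqrt_of_sq_le ?_
  have := discrim_le_zero quadratic
  rw [discrim] at this
  linarith

end Rademacher

section Symmetrization

variable {ι S : Type*} [Fintype ι] [MeasurableSpace S]

/-- Exchange the two members of the `i`-th pair whenever `σ i` is `true`. Applied to a sample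
paired with a ghost sample, this is the symmetrization map. -/
def swapPairs (σ : ι → Bool) (w : ι → S × S) : ι → S × S :=
  fun i ↦ if σ i then (w i).swap else w i

lemma measurePreserving_swapPairs (μ : Measure S) [SigmaFinite μ] (σ : ι → Bool) :
    MeasurePreserving (swapPairs σ) (Measure.pi fun _ ↦ μ.prod μ)
      (Measure.pi fun _ ↦ μ.prod μ) := by
  refine measurePreserving_pi (fun _ ↦ μ.prod μ) (fun _ ↦ μ.prod μ)
    (f := fun i p ↦ if σ i then p.swap else p) fun i ↦ ?_
  cases σ i
  · exact MeasurePreserving.id _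
  · exact Measure.measurePreserving_swap

lemma integral_le_of_expect_swapPairs_le [DecidableEq ι] {μ : Measure S} [IsProbabilityMeasure μ]
    {Φ : (ι → S × S) → ℝ} (hΦ : Integrable Φ (Measure.pi fun _ ↦ μ.prod μ)) {B : ℝ}
    (hB : ∀ w, 𝔼 σ, Φ (swapPairs σ w) ≤ B) :
    ∫ w, Φ w ∂(Measure.pi fun _ ↦ μ.prod μ) ≤ B := by
  set ν := Measure.pi fun _ : ι ↦ μ.prod μ
  have swap_integrable (σ) : Integrable (fun w ↦ Φ (swapPairs σ w)) ν :=
    (measurePreserving_swapPairs μ σ).integrable_comp_of_integrable hΦ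
  have swap_integral (σ) : ∫ w, Φ (swapPairs σ w) ∂ν = ∫ w, Φ w ∂ν := by
    have hσ := measurePreserving_swapPairs μ σ
    rw [← integral_map hσ.aemeasurable (hσ.map_eq.symm ▸ hΦ.aestronglyMeasurable), hσ.map_eq]
  calc ∫ w, Φ w ∂ν = ∫ w, 𝔼 σ, Φ (swapPairs σ w) ∂ν := by
        simp_rw [Fintype.expect_eq_sum_div_card, integral_div,
          integral_finsetSum _ fun σ _ ↦ swap_integrable σ, swap_integral]
        simp
    _ ≤ ∫ _, B ∂ν := by
        refine integral_mono ?_ (integrable_const B) hB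
        simp_rw [Fintype.expect_eq_sum_div_card]
        exact (integrable_finsetSum _ fun σ _ ↦ swap_integrable σ).div_const _
    _ = B := by simp

end Symmetrization

section EmpiricalRisk

open Finset

variable {X ι : Type*} [Fintype ι] {K : ℕ}

/-- The zero-one loss `1{f(x) ≠ y}` of a classifier `f` at a labelled point `s = (x, y)`. -/
def zeroOneLoss (f : X → Fin K) (s : X × Fin K) : ℝ :=
  if f s.1 = s.2 then 0 else 1

/-- The empirical risk: the mean zero-one loss of `f` on the sample `z`. -/
def empiricalRisk (f : X → Fin K) (z : ι → X × Fin K) : ℝ :=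
  𝔼 i, zeroOneLoss f (z i)

lemma empiricalRisk_eq_card_div (f : X → Fin K) (z : ι → X × Fin K) :
    empiricalRisk f z = #{i | f (z i).1 ≠ (z i).2} / Fintype.card ι := by
  simp [empiricalRisk, zeroOneLoss, Fintype.expect_eq_sum_div_card, ← sum_boole, ite_not]

lemma empiricalRisk_swapPairs_sub (f : X → Fin K) (σ : ι → Bool)
    (w : ι → (X × Fin K) × (X × Fin K)) :
    empiricalRisk f (Prod.snd ∘ swapPairs σ w) - empiricalRisk f (Prod.fst ∘ swapPairs σ w) =
      ∑ i, rademacherSign (σ i) *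
        ((zeroOneLoss f (w i).2 - zeroOneLoss f (w i).1) / Fintype.card ι) := by
  simp_rw [empiricalRisk, Fintype.expect_eq_sum_div_card, ← sub_div, ← sum_sub_distrib, sum_div]
  refine sum_congr rfl fun i _ ↦ ?_
  cases hσ : σ i <;> simp [swapPairs, rademacherSign, hσ, neg_div']

-- The selected classifier depends on `σ`, but only through its trace on the `2n` points of `w`,
-- which are the same for all `σ`: this is what makes Massart's lemma applicable.
lemma expect_empiricalRisk_swapPairs_sub_le [Nonempty ι] [DecidableEq ι] {V : ℕ}
    {F : Set (X → Fin K)} (hF : ∀ C, NShatters F C → #C ≤ V) {f : (ι → Bool) → X → Fin K}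
    (hf : ∀ σ, f σ ∈ F) (w : ι → (X × Fin K) × (X × Fin K)) :
    𝔼 σ, (empiricalRisk (f σ) (Prod.snd ∘ swapPairs σ w) -
        empiricalRisk (f σ) (Prod.fst ∘ swapPairs σ w)) ≤
      √(2 * Real.log ((2 * Fintype.card ι + 1) ^ V * K ^ (2 * V)) / Fintype.card ι) := by
  set n := Fintype.card ι with hn
  have n_pos : (0 : ℝ) < n := by exact_mod_cast Fintype.card_pos
  let x : ι ⊕ ι → X := Sum.elim (fun i ↦ (w i).1.1) fun i ↦ (w i).2.1
  let lossGap (u : ι ⊕ ι → Fin K) (i : ι) : ℝ :=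
    ((if u (.inr i) = (w i).2.2 then 0 else 1) - (if u (.inl i) = (w i).1.2 then 0 else 1)) / n
  let D : Finset (ι → ℝ) := (labelPatterns F x).image lossGap
  have mem_D (σ) : lossGap (f σ ∘ x) ∈ D :=
    mem_image_of_mem _ (mem_labelPatterns.mpr ⟨f σ, hf σ, rfl⟩)
  have card_D : #D ≤ (2 * n + 1) ^ V * K ^ (2 * V) := by
    have hK : 0 < K := (f (fun _ ↦ false) (w (Classical.arbitrary ι)).1.1).pos
    simpa [two_mul, hn] using card_image_le.trans (card_labelPatterns_le hK hF x)
  have norm_D (d) (hd : d ∈ D) : ∑ i, d i ^ 2 ≤ 1 / n := by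
    obtain ⟨u, -, rfl⟩ := mem_image.mp hd
    calc ∑ i, lossGap u i ^ 2 ≤ ∑ _i : ι, (1 / n ^ 2 : ℝ) := by
          refine sum_le_sum fun i _ ↦ ?_
          simp only [lossGap, div_pow]
          gcongr
          split_ifs <;> norm_num
      _ = 1 / n := by
          rw [sum_const, card_univ, ← hn, nsmul_eq_mul]
          field_simp
  calc _ = 𝔼 σ, ∑ i, rademacherSign (σ i) * lossGap (f σ ∘ x) i := by
        simp_rw [empiricalRisk_swapPairs_sub]
        rfl
    _ ≤ √(2 * (1 / n) * Real.log #D) := expect_sum_rademacherSign_mul_le_sqrt norm_D mem_D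
    _ ≤ √(2 * Real.log ((2 * n + 1) ^ V * K ^ (2 * V)) / n) := by
        rw [mul_one_div, div_mul_eq_mul_div]
        gcongr
        · exact_mod_cast card_pos.mpr ⟨_, mem_D fun _ ↦ false⟩
        · exact_mod_cast card_D

variable {Ω : Type*} [MeasurableSpace X] [MeasurableSpace Ω]

/-- The population risk: the expected zero-one loss of `f` under a law `μ` of labelled points. In
contrast to `risk`, it does not need `μ` to be given through a class posterior. -/
def populationRisk (μ : Measure (X × Fin K)) (f : X → Fin K) : ℝ :=
  ∫ s, zeroOneLoss f s ∂μ

lemma integrable_zeroOneLoss_comp {ν : Measure Ω} [IsFiniteMeasure ν] {f : Ω → X → Fin K}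
    (hf : Measurable (Function.uncurry f)) {s : Ω → X × Fin K} (hs : Measurable s) :
    Integrable (fun ω ↦ zeroOneLoss (f ω) (s ω)) ν := by
  have meas : Measurable fun ω ↦ zeroOneLoss (f ω) (s ω) :=
    Measurable.ite (measurableSet_eq_fun (hf.comp (measurable_id.prodMk hs.fst)) hs.snd)
      measurable_const measurable_const
  refine .of_bound meas.aestronglyMeasurable 1 (.of_forall fun ω ↦ ?_)
  unfold zeroOneLoss
  split_ifs <;> simp

lemma integrable_empiricalRisk_comp {ν : Measure Ω} [IsFiniteMeasure ν] {f : Ω → X → Fin K}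
    (hf : Measurable (Function.uncurry f)) {z : Ω → ι → X × Fin K} (hz : Measurable z) :
    Integrable (fun ω ↦ empiricalRisk (f ω) (z ω)) ν := by
  simp_rw [empiricalRisk, Fintype.expect_eq_sum_div_card]
  exact (integrable_finsetSum _ fun i _ ↦ integrable_zeroOneLoss_comp hf
    ((measurable_pi_apply i).comp hz)).div_const _

variable {μ : Measure (X × Fin K)} [IsProbabilityMeasure μ]

lemma integral_empiricalRisk [Nonempty ι] {f : X → Fin K} (hf : Measurable f) :
    ∫ z : ι → X × Fin K, empiricalRisk f z ∂(Measure.pi fun _ ↦ μ) = populationRisk μ f := by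
  have loss_measurable : AEStronglyMeasurable (zeroOneLoss f) μ :=
    (integrable_zeroOneLoss_comp (f := fun _ ↦ f) (hf.comp measurable_snd)
      measurable_id).aestronglyMeasurable
  have coordinate (i : ι) :
      ∫ z : ι → X × Fin K, zeroOneLoss f (z i) ∂(Measure.pi fun _ ↦ μ) = populationRisk μ f := by
    rw [integral_comp_eval loss_measurable, populationRisk]
  simp_rw [empiricalRisk, Fintype.expect_eq_sum_div_card, integral_div]
  rw [integral_finsetSum _ fun i _ ↦ integrable_zeroOneLoss_comp (f := fun _ ↦ f)
    (hf.comp measurable_snd) (measurable_pi_apply i)]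
  simp [coordinate]

lemma integral_populationRisk_sub_empiricalRisk [Nonempty ι]
    {f : (ι → X × Fin K) → X → Fin K} (hf : Measurable (Function.uncurry f)) :
    ∫ z, (populationRisk μ (f z) - empiricalRisk (f z) z) ∂(Measure.pi fun _ ↦ μ) =
      ∫ w : ι → (X × Fin K) × (X × Fin K),
        (empiricalRisk (f (Prod.fst ∘ w)) (Prod.snd ∘ w) -
          empiricalRisk (f (Prod.fst ∘ w)) (Prod.fst ∘ w)) ∂(Measure.pi fun _ ↦ μ.prod μ) := by
  set ν := Measure.pi fun _ : ι ↦ μ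
  have hf' : Measurable (Function.uncurry fun p : (ι → X × Fin K) × (ι → X × Fin K) ↦ f p.1) :=
    hf.comp ((measurable_fst.comp measurable_fst).prodMk measurable_snd)
  have gap_integrable : Integrable
      (fun p ↦ empiricalRisk (f p.1) p.2 - empiricalRisk (f p.1) p.1) (ν.prod ν) :=
    (integrable_empiricalRisk_comp hf' measurable_snd).sub
      (integrable_empiricalRisk_comp hf' measurable_fst)
  have ghost (z) : ∫ z', (empiricalRisk (f z) z' - empiricalRisk (f z) z) ∂ν =
      populationRisk μ (f z) - empiricalRisk (f z) z := by
    have hfz : Measurable (f z) := hf.comp measurable_prodMk_left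
    have emp_int : Integrable (fun z' ↦ empiricalRisk (f z) z') ν :=
      integrable_empiricalRisk_comp (f := fun _ ↦ f z) (hfz.comp measurable_snd) measurable_id
    rw [integral_sub emp_int (integrable_const _), integral_empiricalRisk hfz]
    simp
  simp_rw [← ghost]
  rw [← integral_prod _ gap_integrable, ← (measurePreserving_arrowProdEquivProdArrow _ _ ι
    (fun _ ↦ μ) fun _ ↦ μ).integral_comp (MeasurableEquiv.measurableEmbedding _)]
  rfl

variable {V : ℕ} {F : Set (X → Fin K)} {f : (ι → X × Fin K) → X → Fin K}

lemma integral_populationRisk_sub_empiricalRisk_le [Nonempty ι]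
    (hF : ∀ C, NShatters F C → #C ≤ V) (hfF : ∀ z, f z ∈ F)
    (hf : Measurable (Function.uncurry f)) :
    ∫ z, (populationRisk μ (f z) - empiricalRisk (f z) z) ∂(Measure.pi fun _ ↦ μ) ≤
      √(2 * Real.log ((2 * Fintype.card ι + 1) ^ V * K ^ (2 * V)) / Fintype.card ι) := by
  classical
  have fst_measurable : Measurable fun w : ι → (X × Fin K) × (X × Fin K) ↦ Prod.fst ∘ w := by
    unfold Function.comp; fun_prop
  have snd_measurable : Measurable fun w : ι → (X × Fin K) × (X × Fin K) ↦ Prod.snd ∘ w := by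
    unfold Function.comp; fun_prop
  have hf' : Measurable (Function.uncurry
      fun w : ι → (X × Fin K) × (X × Fin K) ↦ f (Prod.fst ∘ w)) :=
    hf.comp ((fst_measurable.comp measurable_fst).prodMk measurable_snd)
  rw [integral_populationRisk_sub_empiricalRisk hf]
  exact integral_le_of_expect_swapPairs_le
    ((integrable_empiricalRisk_comp hf' snd_measurable).sub
      (integrable_empiricalRisk_comp hf' fst_measurable))
    fun w ↦ expect_empiricalRisk_swapPairs_sub_le hF (fun _ ↦ hfF _) w

lemma integrable_populationRisk_comp {ν : Measure Ω} [IsFiniteMeasure ν] {f : Ω → X → Fin K}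
    (hf : Measurable (Function.uncurry f)) : Integrable (fun ω ↦ populationRisk μ (f ω)) ν :=
  (integrable_zeroOneLoss_comp (ν := ν.prod μ) (f := fun p ↦ f p.1)
    (hf.comp ((measurable_fst.comp measurable_fst).prodMk measurable_snd))
    measurable_snd).integral_prod_left

lemma integral_populationRisk_le_add_sqrt [Nonempty ι]
    (hF : ∀ C, NShatters F C → #C ≤ V) (hfF : ∀ z, f z ∈ F)
    (hf : Measurable (Function.uncurry f)) {f₀ : X → Fin K} (hf₀ : Measurable f₀)
    (hERM : ∀ z, empiricalRisk (f z) z ≤ empiricalRisk f₀ z) :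
    ∫ z, populationRisk μ (f z) ∂(Measure.pi fun _ ↦ μ) ≤ populationRisk μ f₀ +
      √(2 * Real.log ((2 * Fintype.card ι + 1) ^ V * K ^ (2 * V)) / Fintype.card ι) := by
  have risk_int := integrable_populationRisk_comp (μ := μ) (ν := Measure.pi fun _ ↦ μ) hf
  have emp_int : Integrable (fun z ↦ empiricalRisk (f z) z) (Measure.pi fun _ ↦ μ) :=
    integrable_empiricalRisk_comp hf measurable_id
  have emp₀_int : Integrable (fun z : ι → X × Fin K ↦ empiricalRisk f₀ z)
      (Measure.pi fun _ ↦ μ) :=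
    integrable_empiricalRisk_comp (f := fun _ ↦ f₀) (hf₀.comp measurable_snd) measurable_id
  have gap := integral_populationRisk_sub_empiricalRisk_le (μ := μ) hF hfF hf
  have erm := integral_mono emp_int emp₀_int hERM
  rw [integral_sub risk_int emp_int] at gap
  rw [integral_empiricalRisk hf₀] at erm
  linarith

end EmpiricalRisk

section Posterior

variable {X Ω : Type*} [MeasurableSpace X] [MeasurableSpace Ω] {K : ℕ}

lemma le_one_of_mem_simplex {p : Fin K → ℝ} (hp : p ∈ simplex K) (i : Fin K) : p i ≤ 1 :=
  hp.2 ▸ Finset.single_le_sum (fun j _ ↦ hp.1 j) (Finset.mem_univ i)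

/-- The regret of deciding for the label `j` when the class probabilities are `p`: the probability
lost against a most likely label. -/
def regret {K : ℕ} (p : Fin K → ℝ) (j : Fin K) : ℝ :=
  (⨆ i, p i) - p j

lemma regret_nonneg (p : Fin K → ℝ) (j : Fin K) : 0 ≤ regret p j :=
  sub_nonneg.mpr (Finite.le_ciSup p j)

lemma regret_le_one {p : Fin K → ℝ} (hp : p ∈ simplex K) (j : Fin K) : regret p j ≤ 1 := by
  have : ⨆ i, p i ≤ 1 := Real.iSup_le (le_one_of_mem_simplex hp) zero_le_one
  have := hp.1 j
  unfold regret
  linarith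

lemma mul_regret_le_regret_of_lt_RSS {p q : Fin K → ℝ} {κ : ℝ} (hκ : 0 ≤ κ)
    (h : ENNReal.ofReal κ < RSS p q) (j : Fin K) : κ * regret p j ≤ regret q j := by
  by_cases hj : regret p j = 0
  · simpa [hj] using regret_nonneg q j
  have pos : 0 < regret p j := (regret_nonneg p j).lt_of_ne' hj
  have ratio : ENNReal.ofReal κ < ENNReal.ofReal (regret q j / regret p j) :=
    h.trans_le <| (iInf_le _ j).trans_eq <| if_neg hj
  exact ((lt_div_iff₀ pos).mp ((ENNReal.ofReal_lt_ofReal_iff_of_nonneg hκ).mp ratio)).le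

variable {P : Measure X} {η ηt : X → Fin K → ℝ}

lemma measurable_apply_of_forall_measurable (hηm : ∀ i, Measurable fun x ↦ η x i) {x : Ω → X}
    (hx : Measurable x) {y : Ω → Fin K} (hy : Measurable y) : Measurable fun ω ↦ η (x ω) (y ω) :=
  (measurable_from_prod_countable_left (f := fun p : X × Fin K ↦ η p.1 p.2) hηm).comp
    (hx.prodMk hy)

lemma integrable_regret [IsFiniteMeasure P] (hη : ∀ x, η x ∈ simplex K)
    (hηm : ∀ i, Measurable fun x ↦ η x i) {f : X → Fin K} (hf : Measurable f) :
    Integrable (fun x ↦ regret (η x) (f x)) P := by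
  have meas : Measurable fun x ↦ regret (η x) (f x) :=
    (Measurable.iSup hηm).sub (measurable_apply_of_forall_measurable hηm measurable_id hf)
  refine .of_bound meas.aestronglyMeasurable 1 (.of_forall fun x ↦ ?_)
  rw [Real.norm_of_nonneg (regret_nonneg _ _)]
  exact regret_le_one (hη x) (f x)

lemma integrable_one_sub_apply {ν : Measure Ω} [IsFiniteMeasure ν] (hη : ∀ x, η x ∈ simplex K)
    (hηm : ∀ i, Measurable fun x ↦ η x i) {x : Ω → X} (hx : Measurable x) {y : Ω → Fin K}
    (hy : Measurable y) : Integrable (fun ω ↦ 1 - η (x ω) (y ω)) ν := by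
  refine .of_bound ((measurable_apply_of_forall_measurable hηm hx hy).const_sub
    1).aestronglyMeasurable 1 (.of_forall fun ω ↦ ?_)
  rw [Real.norm_of_nonneg (sub_nonneg.mpr (le_one_of_mem_simplex (hη _) _))]
  linarith [(hη (x ω)).1 (y ω)]

lemma risk_sub_bayesRisk [IsFiniteMeasure P] (hη : ∀ x, η x ∈ simplex K)
    (hηm : ∀ i, Measurable fun x ↦ η x i) {f : X → Fin K} (hf : Measurable f) :
    risk P η f - bayesRisk P η = ∫ x, regret (η x) (f x) ∂P := by
  have risk_int : Integrable (fun x ↦ 1 - η x (f x)) P :=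
    integrable_one_sub_apply hη hηm measurable_id hf
  have split : risk P η f = bayesRisk P η + ∫ x, regret (η x) (f x) ∂P := by
    have bayes_int : Integrable (fun x ↦ 1 - ⨆ i, η x i) P :=
      (risk_int.sub (integrable_regret hη hηm hf)).congr (.of_forall fun x ↦ by
        simp only [regret, Pi.sub_apply]; ring)
    rw [bayesRisk, ← integral_add bayes_int (integrable_regret hη hηm hf)]
    simp only [risk, regret, sub_add_sub_cancel]
  linarith

lemma risk_eq_bayesRisk {f : X → Fin K} (hf : ∀ x, f x ∈ argmaxSet (η x)) :
    risk P η f = bayesRisk P η :=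
  integral_congr_ae (.of_forall fun x ↦ congrArg (1 - ·) (hf x))

lemma measurableSet_signalRegion (hηm : ∀ i, Measurable fun x ↦ η x i)
    (hηtm : ∀ i, Measurable fun x ↦ ηt x i) (κ : ℝ) : MeasurableSet (signalRegion η ηt κ) := by
  have gap {ζ : X → Fin K → ℝ} (hζ : ∀ i, Measurable fun x ↦ ζ x i) (j : Fin K) :
      Measurable fun x ↦ (⨆ i, ζ x i) - ζ x j :=
    (Measurable.iSup hζ).sub (hζ j)
  exact measurableSet_lt measurable_const <| Measurable.iInf fun j ↦
    Measurable.ite (gap hηm j (measurableSet_singleton 0)) measurable_const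
      ((gap hηtm j).div (gap hηm j)).ennreal_ofReal

lemma risk_sub_bayesRisk_le [IsFiniteMeasure P] {κ : ℝ} (hκ : 0 < κ)
    (hη : ∀ x, η x ∈ simplex K) (hηt : ∀ x, ηt x ∈ simplex K)
    (hηm : ∀ i, Measurable fun x ↦ η x i) (hηtm : ∀ i, Measurable fun x ↦ ηt x i)
    {f : X → Fin K} (hf : Measurable f) :
    risk P η f - bayesRisk P η ≤
      P.real (signalRegion η ηt κ)ᶜ + 1 / κ * (risk P ηt f - bayesRisk P ηt) := by
  have weak_measurable : MeasurableSet (signalRegion η ηt κ)ᶜ :=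
    (measurableSet_signalRegion hηm hηtm κ).compl
  have noisy_int : Integrable (fun x ↦ 1 / κ * regret (ηt x) (f x)) P :=
    (integrable_regret hηt hηtm hf).const_mul _
  have weak_int : Integrable ((signalRegion η ηt κ)ᶜ.indicator fun _ ↦ (1 : ℝ)) P :=
    (integrable_const 1).indicator weak_measurable
  have pointwise (x : X) : regret (η x) (f x) ≤
      (signalRegion η ηt κ)ᶜ.indicator (fun _ ↦ 1) x + 1 / κ * regret (ηt x) (f x) := by
    by_cases hx : x ∈ signalRegion η ηt κ
    · rw [Set.indicator_of_notMem (by simpa using hx), zero_add, one_div_mul_eq_div,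
        le_div_iff₀' hκ]
      exact mul_regret_le_regret_of_lt_RSS hκ.le hx (f x)
    · rw [Set.indicator_of_mem hx]
      have := mul_nonneg (one_div_pos.mpr hκ).le (regret_nonneg (ηt x) (f x))
      linarith [regret_le_one (hη x) (f x)]
  rw [risk_sub_bayesRisk hη hηm hf, risk_sub_bayesRisk hηt hηtm hf]
  calc ∫ x, regret (η x) (f x) ∂P
      ≤ ∫ x, ((signalRegion η ηt κ)ᶜ.indicator (fun _ ↦ 1) x + 1 / κ * regret (ηt x) (f x)) ∂P :=
        integral_mono (integrable_regret hη hηm hf) (weak_int.add noisy_int) pointwise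
    _ = P.real (signalRegion η ηt κ)ᶜ + 1 / κ * ∫ x, regret (ηt x) (f x) ∂P := by
        rw [integral_add weak_int noisy_int, integral_indicator_const _ weak_measurable,
          integral_const_mul, smul_eq_mul, mul_one]

lemma integrable_risk_comp [IsFiniteMeasure P] {ν : Measure Ω} [IsFiniteMeasure ν]
    (hη : ∀ x, η x ∈ simplex K) (hηm : ∀ i, Measurable fun x ↦ η x i) {f : Ω → X → Fin K}
    (hf : Measurable (Function.uncurry f)) : Integrable (fun ω ↦ risk P η (f ω)) ν :=
  (integrable_one_sub_apply (ν := ν.prod P) hη hηm measurable_snd hf).integral_prod_left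

lemma integral_risk_sub_bayesRisk_le [IsFiniteMeasure P] {ν : Measure Ω} [IsProbabilityMeasure ν]
    {κ : ℝ} (hκ : 0 < κ) (hη : ∀ x, η x ∈ simplex K) (hηt : ∀ x, ηt x ∈ simplex K)
    (hηm : ∀ i, Measurable fun x ↦ η x i) (hηtm : ∀ i, Measurable fun x ↦ ηt x i)
    {f : Ω → X → Fin K} (hf : Measurable (Function.uncurry f)) :
    ∫ ω, (risk P η (f ω) - bayesRisk P η) ∂ν ≤ P.real (signalRegion η ηt κ)ᶜ +
      1 / κ * (∫ ω, risk P ηt (f ω) ∂ν - bayesRisk P ηt) := by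
  have clean_int : Integrable (fun ω ↦ risk P η (f ω) - bayesRisk P η) ν :=
    (integrable_risk_comp hη hηm hf).sub (integrable_const _)
  have noisy_int : Integrable (fun ω ↦ risk P ηt (f ω)) ν := integrable_risk_comp hηt hηtm hf
  have scaled_int : Integrable (fun ω ↦ 1 / κ * (risk P ηt (f ω) - bayesRisk P ηt)) ν :=
    (noisy_int.sub (integrable_const _)).const_mul _
  calc ∫ ω, (risk P η (f ω) - bayesRisk P η) ∂ν
      ≤ ∫ ω, (P.real (signalRegion η ηt κ)ᶜ + 1 / κ * (risk P ηt (f ω) - bayesRisk P ηt)) ∂ν :=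
        integral_mono clean_int ((integrable_const _).add scaled_int) fun ω ↦
          risk_sub_bayesRisk_le hκ hη hηt hηm hηtm (hf.comp measurable_prodMk_left)
    _ = P.real (signalRegion η ηt κ)ᶜ + 1 / κ * (∫ ω, risk P ηt (f ω) ∂ν - bayesRisk P ηt) := by
        rw [integral_add (integrable_const _) scaled_int, integral_const_mul,
          integral_sub noisy_int (integrable_const _)]
        simp

end Posterior

section JointMeasure

variable {X : Type*} [MeasurableSpace X] {K : ℕ} {P : Measure X} {ηt : X → Fin K → ℝ}

lemma isProbabilityMeasure_jointMeasure [IsProbabilityMeasure P] (hηt : ∀ x, ηt x ∈ simplex K)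
    (hηtm : ∀ i, Measurable fun x ↦ ηt x i) : IsProbabilityMeasure (jointMeasure P ηt) where
  measure_univ := by
    have label_mass (j : Fin K) : ((P.withDensity fun x ↦ ENNReal.ofReal (ηt x j)).map
        fun x ↦ (x, j)) Set.univ = ∫⁻ x, ENNReal.ofReal (ηt x j) ∂P := by
      rw [Measure.map_apply (by fun_prop) .univ, Set.preimage_univ, withDensity_apply _ .univ,
        Measure.restrict_univ]
    have posterior_mass (x : X) : ∑ j, ENNReal.ofReal (ηt x j) = 1 := by
      rw [← ENNReal.ofReal_sum_of_nonneg fun j _ ↦ (hηt x).1 j, (hηt x).2, ENNReal.ofReal_one]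
    rw [jointMeasure, Measure.finsetSum_apply]
    simp_rw [label_mass]
    rw [← lintegral_finsetSum _ fun j _ ↦ (hηtm j).ennreal_ofReal]
    simp [posterior_mass]

lemma integral_jointMeasure (hηt : ∀ x j, 0 ≤ ηt x j) (hηtm : ∀ i, Measurable fun x ↦ ηt x i)
    {g : X × Fin K → ℝ} (hg : Integrable g (jointMeasure P ηt)) :
    ∫ s, g s ∂(jointMeasure P ηt) = ∫ x, ∑ j, ηt x j * g (x, j) ∂P := by
  rw [jointMeasure, integrable_finsetSum_measure] at hg
  have slice_int (j : Fin K) : Integrable (fun x ↦ ηt x j * g (x, j)) P := by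
    have := (integrable_map_measure (hg j (Finset.mem_univ j)).aestronglyMeasurable
      (by fun_prop)).mp (hg j (Finset.mem_univ j))
    rw [integrable_withDensity_iff_integrable_smul' (hηtm j).ennreal_ofReal (by simp)] at this
    simpa [ENNReal.toReal_ofReal (hηt _ j)] using this
  rw [integral_finsetSum _ fun j _ ↦ slice_int j, jointMeasure, integral_finsetSum_measure hg]
  refine Finset.sum_congr rfl fun j hj ↦ ?_
  rw [integral_map (by fun_prop) (hg j hj).aestronglyMeasurable,
    integral_withDensity_eq_integral_toReal_smul (hηtm j).ennreal_ofReal (by simp)]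
  simp [ENNReal.toReal_ofReal (hηt _ j)]

lemma populationRisk_jointMeasure [IsProbabilityMeasure P] (hηt : ∀ x, ηt x ∈ simplex K)
    (hηtm : ∀ i, Measurable fun x ↦ ηt x i) {f : X → Fin K} (hf : Measurable f) :
    populationRisk (jointMeasure P ηt) f = risk P ηt f := by
  have := isProbabilityMeasure_jointMeasure (P := P) hηt hηtm
  have loss_int : Integrable (zeroOneLoss f) (jointMeasure P ηt) :=
    integrable_zeroOneLoss_comp (f := fun _ ↦ f) (hf.comp measurable_snd) measurable_id
  have conditional_loss (x : X) :
      ∑ j, ηt x j * zeroOneLoss f (x, j) = 1 - ηt x (f x) := by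
    have (j : Fin K) :
        ηt x j * zeroOneLoss f (x, j) = ηt x j - if f x = j then ηt x j else 0 := by
      by_cases h : f x = j <;> simp [zeroOneLoss, h]
    simp [this, Finset.sum_sub_distrib, (hηt x).2]
  rw [populationRisk, integral_jointMeasure (fun x ↦ (hηt x).1) hηtm loss_int, risk]
  simp_rw [conditional_loss]

end JointMeasure

lemma log_patternBound_le {K V n : ℕ} (hK : 2 ≤ K) (hn : 1 ≤ n) :
    Real.log ((2 * n + 1) ^ V * K ^ (2 * V)) ≤ V * Real.log n + 4 * V * Real.log K := by
  have hn' : (1 : ℝ) ≤ n := by exact_mod_cast hn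
  have hK' : (2 : ℝ) ≤ K := by exact_mod_cast hK
  have log_le : Real.log (2 * n + 1) ≤ Real.log n + 2 * Real.log K :=
    calc Real.log (2 * n + 1) ≤ Real.log (n * (K : ℝ) ^ 2) :=
          Real.log_le_log (by positivity) (by nlinarith [pow_le_pow_left₀ zero_le_two hK' 2])
      _ = Real.log n + 2 * Real.log K := by
          rw [Real.log_mul (by positivity) (by positivity), Real.log_pow, Nat.cast_ofNat]
  have := mul_le_mul_of_nonneg_left log_le V.cast_nonneg
  rw [Real.log_mul (by positivity) (by positivity), Real.log_pow, Real.log_pow]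
  push_cast
  linarith

lemma sqrt_log_patternBound_le {K V n : ℕ} (hK : 2 ≤ K) (hn : 1 ≤ n) :
    √(2 * Real.log ((2 * n + 1) ^ V * K ^ (2 * V)) / n) ≤
      16 * √((V * Real.log n + 2 * V * Real.log K + 4) / (2 * n)) := by
  have hn' : (0 : ℝ) < n := by exact_mod_cast hn
  have log_n : 0 ≤ V * Real.log n := mul_nonneg V.cast_nonneg (Real.log_natCast_nonneg n)
  have log_K : 0 ≤ V * Real.log K := mul_nonneg V.cast_nonneg (Real.log_natCast_nonneg K)
  refine Real.sqrt_le_iff.mpr ⟨by positivity, ?_⟩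
  rw [mul_pow, Real.sq_sqrt (by positivity)]
  calc 2 * Real.log ((2 * n + 1) ^ V * K ^ (2 * V)) / n
      ≤ 128 * (V * Real.log n + 2 * V * Real.log K + 4) / n := by
        refine div_le_div_of_nonneg_right ?_ hn'.le
        linarith [log_patternBound_le (V := V) hK hn]
    _ = 16 ^ 2 * ((V * Real.log n + 2 * V * Real.log K + 4) / (2 * n)) := by
        field_simp
        norm_num

theorem ni_erm_excess_risk_upper_bound_general
    {X : Type*} [MeasurableSpace X] {K V n : ℕ} (hK : 2 ≤ K) (hn : 1 ≤ n)
    {ε κ : ℝ} (hκ : 0 < κ) (P : Measure X) [IsProbabilityMeasure P]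
    {η ηt : X → Fin K → ℝ} (hη : ∀ x, η x ∈ simplex K) (hηt : ∀ x, ηt x ∈ simplex K)
    (hηm : ∀ i, Measurable fun x ↦ η x i) (hηtm : ∀ i, Measurable fun x ↦ ηt x i)
    (hsig : 1 - ε ≤ (P (signalRegion η ηt κ)).toReal)
    {F : Set (X → Fin K)} (hdim : ∀ C : Finset X, NShatters F C → C.card ≤ V)
    {f₀ : X → Fin K} (hf₀ : Measurable f₀)
    {fhat : (Fin n → X × Fin K) → X → Fin K} (hmem : ∀ z, fhat z ∈ F)
    (hfhat : Measurable (Function.uncurry fhat))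
    (hERM : ∀ z, (Finset.univ.filter fun i ↦ fhat z (z i).1 ≠ (z i).2).card ≤
      (Finset.univ.filter fun i ↦ f₀ (z i).1 ≠ (z i).2).card) :
    ∫ z, (risk P η (fhat z) - bayesRisk P η) ∂(Measure.pi fun _ : Fin n ↦ jointMeasure P ηt) ≤
      ε + 1 / κ * ((risk P ηt f₀ - bayesRisk P ηt) +
        16 * √((V * Real.log n + 2 * V * Real.log K + 4) / (2 * n))) := by
  have := isProbabilityMeasure_jointMeasure (P := P) hηt hηtm
  have : Nonempty (Fin n) := Fin.pos_iff_nonempty.mp hn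
  have weak_mass : P.real (signalRegion η ηt κ)ᶜ ≤ ε := by
    rw [probReal_compl_eq_one_sub (measurableSet_signalRegion hηm hηtm κ)]
    exact sub_le_comm.mp hsig
  have empirical_le (z) : empiricalRisk (fhat z) z ≤ empiricalRisk f₀ z := by
    simp only [empiricalRisk_eq_card_div]
    exact div_le_div_of_nonneg_right (by exact_mod_cast hERM z) (Nat.cast_nonneg _)
  have noisy_risk := integral_populationRisk_le_add_sqrt (μ := jointMeasure P ηt) hdim hmem hfhat
    hf₀ empirical_le
  have fhat_measurable (z) : Measurable (fhat z) := hfhat.comp measurable_prodMk_left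
  simp only [populationRisk_jointMeasure hηt hηtm (fhat_measurable _),
    populationRisk_jointMeasure hηt hηtm hf₀, Fintype.card_fin] at noisy_risk
  refine (integral_risk_sub_bayesRisk_le hκ hη hηt hηm hηtm hfhat).trans ?_
  gcongr
  linarith [sqrt_log_patternBound_le (V := V) hK hn]

/-- Excess risk upper bound for noise-ignorant ERM over a class of Natarajan
dimension `V` containing the noisy Bayes classifier:
`E[R(f̂) - R(f*)] ≤ ε + (1/κ)·16·√((V log n + 2V log K + 4)/(2n))`. -/
theorem ni_erm_excess_risk_upper_bound
    {X : Type*} [MeasurableSpace X] (K V n : ℕ) (hK : 2 ≤ K) (hn : 1 ≤ n)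
    (ε κ : ℝ) (hε : ε ∈ Set.Icc (0 : ℝ) 1) (hκ : 0 < κ)
    (P : Measure X) [IsProbabilityMeasure P]
    (η ηt : X → Fin K → ℝ)
    (hη : ∀ x, η x ∈ simplex K) (hηt : ∀ x, ηt x ∈ simplex K)
    (hηm : ∀ i, Measurable fun x => η x i) (hηtm : ∀ i, Measurable fun x => ηt x i)
    (hsig : 1 - ε ≤ (P (signalRegion η ηt κ)).toReal)
    (F : Set (X → Fin K)) (hFm : ∀ f ∈ F, Measurable f)
    (hdim_le : ∀ C : Finset X, NShatters F C → C.card ≤ V)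
    (hdim_ex : ∃ C : Finset X, NShatters F C ∧ C.card = V)
    (hbayes : ∃ ftil ∈ F, ∀ x, ftil x ∈ argmaxSet (ηt x))
    (fhat : (Fin n → X × Fin K) → X → Fin K)
    (hmem : ∀ z, fhat z ∈ F)
    (hERM : ∀ z, ∀ f ∈ F,
      (Finset.univ.filter fun i => fhat z (z i).1 ≠ (z i).2).card ≤
        (Finset.univ.filter fun i => f (z i).1 ≠ (z i).2).card)
    (hfhat : Measurable fun p : (Fin n → X × Fin K) × X => fhat p.1 p.2) :
    (∫ z, (risk P η (fhat z) - bayesRisk P η)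
        ∂(Measure.pi fun _ : Fin n => jointMeasure P ηt)) ≤
      ε + (1 / κ) * 16 *
        Real.sqrt ((V * Real.log n + 2 * V * Real.log K + 4) / (2 * n)) := by
  obtain ⟨f, hf, hmax⟩ := hbayes
  simpa [risk_eq_bayesRisk hmax, mul_assoc] using ni_erm_excess_risk_upper_bound_general hK hn hκ P
    hη hηt hηm hηtm hsig hdim_le (hFm f hf) hmem hfhat fun z ↦ hERM z f hf
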